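/- There exist sequences of nonnegative integrable functions f_n, g_n on the circle with integrable logarithms such that ‖f_n‖_{L¹}, ‖g_n‖_{L¹} ≤ 1, ‖g_n − f_n‖_{L¹} ≤ 1/n, ‖log g_n − log f_n‖_{L¹} ≤ 1/n, yet ‖g_n⁺ − f_n⁺‖_{H²} ≥ 2 − 1/n. In particular, there is no modulus of continuity Π : [0,∞)² → [0,∞) with Π(s,t) → 0 as (s,t) → (0,0) such that ‖g⁺ − f⁺‖²_{H²} ≤ Π(‖g − f‖_{L¹}, ‖log g − log f‖_{L¹}) holds for all densities f, g with L¹ norm at most 1. -/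

import Mathlib

open MeasureTheory Set Filter

/-- The canonical outer spectral factor
`f⁺(z) = exp((1/4π) ∫₀^{2π} ((e^{iθ}+z)/(e^{iθ}−z)) log f(e^{iθ}) dθ)`. -/
noncomputable def spectralFactor (f : ℝ → ℝ) (z : ℂ) : ℂ :=
  Complex.exp ((1 / (4 * Real.pi) : ℂ) *
    ∫ θ in (0 : ℝ)..(2 * Real.pi),
      ((Complex.exp ((θ : ℂ) * Complex.I) + z) /
        (Complex.exp ((θ : ℂ) * Complex.I) - z)) * (Real.log (f θ) : ℂ))

/-- The squared `H²` distance of two analytic functions on the disk,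
`‖F − G‖²_{H²} = sup_{0 ≤ r < 1} ∫₀^{2π} |F(re^{iθ}) − G(re^{iθ})|² dθ`. -/
noncomputable def H2distSq (F G : ℂ → ℂ) : ℝ :=
  sSup {x : ℝ | ∃ r ∈ Ico (0 : ℝ) 1,
    x = ∫ θ in (0 : ℝ)..(2 * Real.pi),
      ‖F ((r : ℂ) * Complex.exp ((θ : ℂ) * Complex.I)) -
        G ((r : ℂ) * Complex.exp ((θ : ℂ) * Complex.I))‖ ^ 2}

/-!
By the Schwarz integral formula, the outer factor of `|exp u|²` is `exp u` for every `u` holomorphic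
in the disk, continuous up to the boundary and real at the origin. Take `f = |exp u|²` and
`g = |exp (u + v)|²`. If `|Re v|` is small, then `f` and `g`, as well as their logarithms, are close
in `L¹`, whereas `‖g⁺ - f⁺‖²` is at least the integral of `f |exp v - 1|²`.

The imaginary part of `v` may still be large: `v z = -i ε log (1 + ρ z)` maps the disk into a strip
of width `π ε`, and `v (-1) = π i` for a suitable `ρ < 1` (this replaces the conformal map onto a
thin ellipse). Then `|exp v - 1|² = 4` at `-1`, and the densities proportional to `exp (-2 N cos θ)`
concentrate there as `N → ∞`.
-/

open Metric
open scoped Real Topology ComplexConjugate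

section HerglotzRieszKernel

variable {E : Type*} [NormedAddCommGroup E] [NormedSpace ℂ E] {f : ℂ → E} {c w : ℂ} {R : ℝ}

lemma continuousOn_sphere_abs_of_diffContOnCl (hf : DiffContOnCl ℂ f (ball c R)) (hR : 0 < R) :
    ContinuousOn f (sphere c |R|) := by
  rw [abs_of_pos hR]
  exact hf.continuousOn_ball.mono sphere_subset_closedBall

lemma circleIntegrable_herglotzRieszKernel_smul (hf : DiffContOnCl ℂ f (ball c R))
    (hw : w ∈ ball c R) : CircleIntegrable (herglotzRieszKernel c w • f) c R :=
  ((continuousOn_herglotzRieszKernel_sphere hw).smul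
    (continuousOn_sphere_abs_of_diffContOnCl hf (pos_of_mem_ball hw))).circleIntegrable'

variable [CompleteSpace E]

lemma circleAverage_herglotzRieszKernel_smul (hf : DiffContOnCl ℂ f (ball c R))
    (hw : w ∈ ball c R) :
    Real.circleAverage (herglotzRieszKernel c w • f) c R = (2 : ℂ) • f w - f c := by
  have hR : |R| = R := abs_of_pos (pos_of_mem_ball hw)
  have hne : ∀ z ∈ sphere c |R|, z - w ≠ 0 := by
    rintro z hz h
    rw [sub_eq_zero.1 h, hR] at hz
    exact (mem_ball.1 hw).ne hz
  have hfc := continuousOn_sphere_abs_of_diffContOnCl hf (pos_of_mem_ball hw)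
  have hcauchy : CircleIntegrable (fun z ↦ (2 : ℂ) • ((z - c) / (z - w)) • f z) c R :=
    (((by fun_prop : ContinuousOn (fun z : ℂ ↦ z - c) _).div (by fun_prop) hne).smul hfc
      |>.const_smul (2 : ℂ)).circleIntegrable'
  rw [← hR] at hf hw
  calc Real.circleAverage (herglotzRieszKernel c w • f) c R
      = Real.circleAverage (fun z ↦ (2 : ℂ) • ((z - c) / (z - w)) • f z - f z) c R := by
        refine Real.circleAverage_congr_sphere fun z hz ↦ ?_
        have hker : herglotzRieszKernel c w z = 2 * ((z - c) / (z - w)) - 1 := by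
          rw [herglotzRieszKernel_def, sub_sub_sub_cancel_right]
          have := hne z hz
          field_simp
          ring
        rw [Pi.smul_apply', hker, sub_smul, one_smul, mul_smul]
    _ = (2 : ℂ) • f w - f c := by
        rw [Real.circleAverage_fun_sub hcauchy hfc.circleIntegrable', Real.circleAverage_fun_smul,
          hf.circleAverage_smul_div hw, hf.circleAverage]

lemma circleAverage_conj_herglotzRieszKernel_smul (hf : DiffContOnCl ℂ f (ball c R))
    (hw : w ∈ ball c R) :
    Real.circleAverage ((conj ∘ herglotzRieszKernel c w) • f) c R = f c := by
  have hconj : (conj ∘ herglotzRieszKernel c w) • f =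
      (2 : ℂ) • ((Complex.re ∘ herglotzRieszKernel c w) • f) - herglotzRieszKernel c w • f := by
    ext z
    simp only [Pi.smul_apply', Pi.sub_apply, Pi.smul_apply, Function.comp_apply]
    rw [← Complex.coe_smul, smul_smul, ← sub_smul, Complex.re_eq_add_conj]
    congr 1
    ring
  have hre : CircleIntegrable ((2 : ℂ) • ((Complex.re ∘ herglotzRieszKernel c w) • f)) c R :=
    (((Complex.continuous_re.comp_continuousOn (continuousOn_herglotzRieszKernel_sphere hw)).smul
      (continuousOn_sphere_abs_of_diffContOnCl hf (pos_of_mem_ball hw))).const_smul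
        (2 : ℂ)).circleIntegrable'
  rw [hconj, Real.circleAverage_sub hre (circleIntegrable_herglotzRieszKernel_smul hf hw),
    Real.circleAverage_smul, hf.circleAverage_re_herglotzRieszKernel_smul hw,
    circleAverage_herglotzRieszKernel_smul hf hw, sub_sub_cancel]

lemma circleAverage_herglotzRieszKernel_smul_conj {u : ℂ → ℂ} (hu : DiffContOnCl ℂ u (ball c R))
    (hw : w ∈ ball c R) :
    Real.circleAverage (herglotzRieszKernel c w • (conj ∘ u)) c R = conj (u c) := by
  have hint : CircleIntegrable ((conj ∘ herglotzRieszKernel c w) • u) c R :=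
    ((Complex.continuous_conj.comp_continuousOn (continuousOn_herglotzRieszKernel_sphere hw)).smul
      (continuousOn_sphere_abs_of_diffContOnCl hu (pos_of_mem_ball hw))).circleIntegrable'
  have hconj : herglotzRieszKernel c w • (conj ∘ u) =
      (Complex.conjCLE : ℂ →L[ℝ] ℂ) ∘ ((conj ∘ herglotzRieszKernel c w) • u) := by
    ext z
    simp
  rw [hconj, ContinuousLinearMap.circleAverage_comp_comm _ hint,
    circleAverage_conj_herglotzRieszKernel_smul hu hw]
  simp

/-- The **Schwarz integral formula**. -/
theorem circleAverage_herglotzRieszKernel_mul_re {u : ℂ → ℂ} (hu : DiffContOnCl ℂ u (ball c R))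
    (hw : w ∈ ball c R) :
    Real.circleAverage (fun z ↦ herglotzRieszKernel c w z * (u z).re) c R =
      u w - (u c).im * Complex.I := by
  have hsplit : (fun z ↦ herglotzRieszKernel c w z * ((u z).re : ℂ)) =
      (2⁻¹ : ℂ) • (herglotzRieszKernel c w • u + herglotzRieszKernel c w • (conj ∘ u)) := by
    ext z
    simp only [Complex.re_eq_add_conj, Pi.smul_apply, Pi.add_apply, smul_eq_mul,
      Pi.mul_apply, Function.comp_apply]
    ring
  have hconj : CircleIntegrable (herglotzRieszKernel c w • (conj ∘ u)) c R :=
    ((continuousOn_herglotzRieszKernel_sphere hw).smul (Complex.continuous_conj.comp_continuousOn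
      (continuousOn_sphere_abs_of_diffContOnCl hu (pos_of_mem_ball hw)))).circleIntegrable'
  rw [hsplit, Real.circleAverage_smul,
    Real.circleAverage_add (circleIntegrable_herglotzRieszKernel_smul hu hw) hconj,
    circleAverage_herglotzRieszKernel_smul hu hw, circleAverage_herglotzRieszKernel_smul_conj hu hw,
    smul_eq_mul, smul_eq_mul, Complex.im_eq_sub_conj]
  field_simp
  ring

end HerglotzRieszKernel

lemma le_csSup_image_Ico {α β : Type*} [LinearOrder α] [DenselyOrdered α]
    [TopologicalSpace α] [OrderTopology α] [CompactIccSpace α]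
    [ConditionallyCompleteLinearOrder β] [TopologicalSpace β] [OrderTopology β]
    {Φ : α → β} {a b : α} (hab : a < b) (hΦ : ContinuousOn Φ (Icc a b)) :
    Φ b ≤ sSup (Φ '' Ico a b) := by
  have hbdd : BddAbove (Φ '' Ico a b) :=
    (isCompact_Icc.bddAbove_image hΦ).mono (image_mono Ico_subset_Icc_self)
  have hb : b ∈ closure (Ico a b) := by
    rw [closure_Ico hab.ne]
    exact right_mem_Icc.2 hab.le
  have hΦb : Φ b ∈ closure (Φ '' Ico a b) :=
    ((hΦ b (right_mem_Icc.2 hab.le)).mono Ico_subset_Icc_self).mem_closure_image hb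
  exact closure_minimal (fun _ hy ↦ le_csSup hbdd hy) isClosed_Iic hΦb

theorem integral_norm_sub_sq_le_H2distSq {F G : ℂ → ℂ} (hF : ContinuousOn F (closedBall 0 1))
    (hG : ContinuousOn G (closedBall 0 1)) :
    ∫ θ in (0 : ℝ)..(2 * π), ‖F (circleMap 0 1 θ) - G (circleMap 0 1 θ)‖ ^ 2 ≤ H2distSq F G := by
  have hmean : ContinuousOn (Real.circleAverage (fun z ↦ ‖F z - G z‖ ^ 2) 0) (Icc 0 1) := by
    refine Real.ContinuousOn.circleAverage (((hF.sub hG).norm.pow 2).mono fun z hz ↦ ?_)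
      fun r hr ↦ hr.1
    simpa using hz.2
  have hintegral : ∀ r : ℝ, 2 * π * Real.circleAverage (fun z ↦ ‖F z - G z‖ ^ 2) 0 r =
      ∫ θ in (0 : ℝ)..(2 * π), ‖F (circleMap 0 r θ) - G (circleMap 0 r θ)‖ ^ 2 := fun r ↦
    mul_inv_cancel_left₀ Real.two_pi_pos.ne' _
  have hsup := le_csSup_image_Ico zero_lt_one (hmean.const_mul (2 * π))
  simp only [hintegral] at hsup
  refine hsup.trans_eq ?_
  simp only [H2distSq, image, circleMap_zero, eq_comm]

lemma H2distSq_congr {F F' G G' : ℂ → ℂ} (hF : EqOn F F' (ball 0 1)) (hG : EqOn G G' (ball 0 1)) :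
    H2distSq F G = H2distSq F' G' := by
  have hmem : ∀ r ∈ Ico (0 : ℝ) 1, ∀ θ : ℝ,
      (r : ℂ) * Complex.exp (θ * Complex.I) ∈ ball (0 : ℂ) 1 := fun r hr θ ↦ by
    simpa [abs_of_nonneg hr.1] using hr.2
  unfold H2distSq
  congr 1
  ext x
  refine exists_congr fun r ↦ and_congr_right fun hr ↦ ?_
  simp only [hF (hmem r hr _), hG (hmem r hr _)]

/-- The density `|exp u|²` on the unit circle, as a function of the angle. If `u` is holomorphic in
the disk and real at the origin, then `exp u` is its outer spectral factor. -/
noncomputable def outerDensity (u : ℂ → ℂ) (θ : ℝ) : ℝ :=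
  Real.exp (2 * (u (circleMap 0 1 θ)).re)

lemma outerDensity_pos (u : ℂ → ℂ) (θ : ℝ) : 0 < outerDensity u θ := Real.exp_pos _

lemma log_outerDensity (u : ℂ → ℂ) (θ : ℝ) :
    Real.log (outerDensity u θ) = 2 * (u (circleMap 0 1 θ)).re :=
  Real.log_exp _

lemma log_outerDensity_add (u v : ℂ → ℂ) (θ : ℝ) :
    Real.log (outerDensity (u + v) θ) =
      Real.log (outerDensity u θ) + 2 * (v (circleMap 0 1 θ)).re := by
  simp only [log_outerDensity, Pi.add_apply, Complex.add_re, mul_add]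

lemma norm_exp_add_sub_exp_sq (z w : ℂ) :
    ‖Complex.exp (z + w) - Complex.exp z‖ ^ 2 =
      Real.exp (2 * z.re) * ‖Complex.exp w - 1‖ ^ 2 := by
  rw [Complex.exp_add, ← mul_sub_one, norm_mul, mul_pow, Complex.norm_exp, ← Real.exp_nat_mul,
    Nat.cast_ofNat]

lemma continuous_comp_circleMap {u : ℂ → ℂ} (hu : ContinuousOn u (sphere 0 1)) :
    Continuous fun θ ↦ u (circleMap 0 1 θ) :=
  hu.comp_continuous (continuous_circleMap 0 1) (circleMap_mem_sphere 0 zero_le_one)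

lemma continuous_log_outerDensity {u : ℂ → ℂ} (hu : ContinuousOn u (sphere 0 1)) :
    Continuous fun θ ↦ Real.log (outerDensity u θ) := by
  simp only [log_outerDensity]
  exact continuous_const.mul (Complex.continuous_re.comp (continuous_comp_circleMap hu))

lemma continuous_outerDensity {u : ℂ → ℂ} (hu : ContinuousOn u (sphere 0 1)) :
    Continuous (outerDensity u) := by
  simpa only [Function.comp_def, Real.exp_log (outerDensity_pos u _)] using
    Real.continuous_exp.comp (continuous_log_outerDensity hu)

theorem spectralFactor_outerDensity {u : ℂ → ℂ} (hu : DiffContOnCl ℂ u (ball 0 1))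
    (hu0 : (u 0).im = 0) : EqOn (spectralFactor (outerDensity u)) (Complex.exp ∘ u) (ball 0 1) := by
  intro w hw
  have hschwarz := circleAverage_herglotzRieszKernel_mul_re hu hw
  simp only [hu0, Complex.ofReal_zero, zero_mul, sub_zero, Real.circleAverage_def,
    herglotzRieszKernel_def, circleMap_zero, Complex.ofReal_one, one_mul, Complex.real_smul]
    at hschwarz
  simp only [spectralFactor, log_outerDensity, Function.comp_apply, ← hschwarz, circleMap_zero,
    Complex.ofReal_one, one_mul, Complex.ofReal_mul, mul_left_comm _ ((2 : ℝ) : ℂ),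
    intervalIntegral.integral_const_mul]
  congr 1
  push_cast
  ring

theorem integral_outerDensity_mul_le_H2distSq {u v : ℂ → ℂ} (hu : DiffContOnCl ℂ u (ball 0 1))
    (hu0 : (u 0).im = 0) (hv : DiffContOnCl ℂ v (ball 0 1)) (hv0 : (v 0).im = 0) :
    ∫ θ in Ico 0 (2 * π),
        outerDensity u θ * ‖Complex.exp (v (circleMap 0 1 θ)) - 1‖ ^ 2 ≤
      H2distSq (spectralFactor (outerDensity (u + v))) (spectralFactor (outerDensity u)) := by
  have huv0 : ((u + v) 0).im = 0 := by simp [hu0, hv0]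
  have hcont : ∀ {f : ℂ → ℂ}, DiffContOnCl ℂ f (ball 0 1) →
      ContinuousOn (Complex.exp ∘ f) (closedBall 0 1) := fun hf ↦
    Complex.continuous_exp.comp_continuousOn hf.continuousOn_ball
  rw [H2distSq_congr (spectralFactor_outerDensity (hu.add hv) huv0)
    (spectralFactor_outerDensity hu hu0)]
  refine le_of_eq_of_le ?_ (integral_norm_sub_sq_le_H2distSq (hcont (hu.add hv)) (hcont hu))
  simp only [intervalIntegral.integral_of_le Real.two_pi_pos.le, ← integral_Ico_eq_integral_Ioc,
    Function.comp_apply, Pi.add_apply, norm_exp_add_sub_exp_sq, outerDensity]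

lemma abs_arg_one_add_le {z : ℂ} (hz : ‖z‖ ≤ 1) : |(1 + z).arg| ≤ π / 2 := by
  refine Complex.abs_arg_le_pi_div_two_iff.2 ?_
  have hre := neg_le_of_abs_le ((Complex.abs_re_le_norm z).trans hz)
  rw [Complex.add_re, Complex.one_re]
  linarith

theorem exists_diffContOnCl_abs_re_le {η t : ℝ} (hη : 0 < η) (ht : 0 ≤ t) :
    ∃ v : ℂ → ℂ, DiffContOnCl ℂ v (ball 0 1) ∧ v 0 = 0 ∧ v (-1) = t * Complex.I ∧
      ∀ z ∈ closedBall (0 : ℂ) 1, |(v z).re| ≤ η := by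
  set ε : ℝ := η / (π / 2)
  have hε : 0 < ε := by positivity
  set ρ : ℝ := 1 - Real.exp (-(t / ε)) with hρ
  have hρ0 : 0 ≤ ρ := sub_nonneg.2 (Real.exp_le_one_iff.2 (neg_nonpos.2 (by positivity)))
  have hρ1 : ρ < 1 := sub_lt_self 1 (Real.exp_pos _)
  have hnorm : ∀ z ∈ closedBall (0 : ℂ) 1, ‖ρ * z‖ < 1 := fun z hz ↦ by
    rw [norm_mul, Complex.norm_real, Real.norm_of_nonneg hρ0]
    exact mul_lt_one_of_nonneg_of_lt_one_left hρ0 hρ1 (mem_closedBall_zero_iff.1 hz)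
  refine ⟨fun z ↦ -(Complex.I * ε) * Complex.log (1 + ρ * z), ?_, by simp, ?_, fun z hz ↦ ?_⟩
  · refine DifferentiableOn.diffContOnCl fun z hz ↦ DifferentiableAt.differentiableWithinAt ?_
    rw [closure_ball _ one_ne_zero] at hz
    exact ((by fun_prop : DifferentiableAt ℂ (fun z : ℂ ↦ 1 + ρ * z) z).clog
      (Complex.mem_slitPlane_of_norm_lt_one (hnorm z hz))).const_mul _
  · have hlog : Complex.log (1 + ρ * (-1)) = -(t / ε : ℝ) := by
      rw [show (1 + (ρ : ℂ) * (-1)) = (Real.exp (-(t / ε)) : ℝ) by rw [hρ]; push_cast; ring,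
        ← Complex.ofReal_log (Real.exp_pos _).le, Real.log_exp, Complex.ofReal_neg]
    have hε' : (ε : ℂ) ≠ 0 := Complex.ofReal_ne_zero.2 hε.ne'
    simp only [hlog, Complex.ofReal_div]
    field_simp
  · calc |(-(Complex.I * ε) * Complex.log (1 + ρ * z)).re|
        = ε * |(1 + ρ * z).arg| := by
          simp [Complex.log_im, abs_mul, abs_of_pos hε]
      _ ≤ ε * (π / 2) := by gcongr; exact abs_arg_one_add_le (hnorm z hz).le
      _ = η := div_mul_cancel₀ _ (by positivity)

lemma neg_one_lt_cos_of_ne_pi {θ : ℝ} (hθ : θ ∈ Ioo (-π) (3 * π)) (hne : θ ≠ π) :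
    -1 < Real.cos θ := by
  refine (Real.neg_one_le_cos θ).lt_of_ne fun hcos ↦ hne (sub_eq_zero.1 ?_)
  rw [← Real.cos_eq_one_iff_of_lt_of_lt (by linarith [hθ.1]) (by linarith [hθ.2]),
    Real.cos_sub_pi, ← hcos, neg_neg]

theorem tendsto_integral_exp_neg_cos_pow {h : ℝ → ℝ} (hh : ContinuousOn h (Icc 0 (2 * π))) :
    Tendsto (fun N : ℕ ↦ (∫ θ in Icc 0 (2 * π), Real.exp (-2 * Real.cos θ) ^ N)⁻¹ *
      ∫ θ in Icc 0 (2 * π), Real.exp (-2 * Real.cos θ) ^ N * h θ) atTop (𝓝 (h π)) := by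
  have hπ : π ∈ closure (interior (Icc 0 (2 * π))) := by
    rw [interior_Icc, closure_Ioo Real.two_pi_pos.ne]
    exact ⟨Real.pi_pos.le, by linarith [Real.pi_pos]⟩
  refine tendsto_setIntegral_pow_smul_of_unique_maximum_of_isCompact_of_continuousOn isCompact_Icc
    (by fun_prop) (fun θ hθ hne ↦ ?_) (fun θ _ ↦ (Real.exp_pos _).le) (Real.exp_pos _) hπ hh
  rw [Real.exp_lt_exp, Real.cos_pi]
  have hθ' : θ ∈ Ioo (-π) (3 * π) :=
    ⟨by linarith [hθ.1, Real.pi_pos], by linarith [hθ.2, Real.pi_pos]⟩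
  linarith [neg_one_lt_cos_of_ne_pi hθ' hne]

lemma outerDensity_sub_natCast_mul (c : ℝ) (N : ℕ) (θ : ℝ) :
    outerDensity (fun z ↦ c - N * z) θ = Real.exp (2 * c) * Real.exp (-2 * Real.cos θ) ^ N := by
  have hre : ((c : ℂ) - N * circleMap 0 1 θ).re = c - N * Real.cos θ := by
    rw [circleMap_zero, Complex.ofReal_one, one_mul, ← Complex.ofReal_natCast, Complex.sub_re,
      Complex.ofReal_re, Complex.re_ofReal_mul, Complex.exp_ofReal_mul_I_re]
  rw [outerDensity, hre, ← Real.exp_nat_mul, ← Real.exp_add]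
  congr 1
  ring

theorem exists_outerDensity_lt_integral_mul {h : ℝ → ℝ} (hh : ContinuousOn h (Icc 0 (2 * π)))
    {a m : ℝ} (hm : 0 < m) (ha : a < m * h π) :
    ∃ u : ℂ → ℂ, Differentiable ℂ u ∧ (u 0).im = 0 ∧
      ∫ θ in Ico 0 (2 * π), outerDensity u θ = m ∧
      a < ∫ θ in Ico 0 (2 * π), outerDensity u θ * h θ := by
  obtain ⟨N, hN⟩ :=
    (((tendsto_integral_exp_neg_cos_pow hh).const_mul m).eventually_const_lt ha).exists
  simp only [integral_Icc_eq_integral_Ico] at hN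
  set k : ℝ → ℝ := fun θ ↦ Real.exp (-2 * Real.cos θ) ^ N
  set J : ℝ := ∫ θ in Ico 0 (2 * π), k θ
  have hk : Continuous k := by fun_prop
  have hJ : 0 < J := by
    simp only [J, integral_Ico_eq_integral_Ioc,
      ← intervalIntegral.integral_of_le Real.two_pi_pos.le]
    exact intervalIntegral.intervalIntegral_pos_of_pos (hk.intervalIntegrable _ _)
      (fun θ ↦ pow_pos (Real.exp_pos _) N) Real.two_pi_pos
  have hdensity : ∀ θ, outerDensity (fun z ↦ (Real.log (m * J⁻¹) / 2 : ℝ) - N * z) θ =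
      m * J⁻¹ * k θ := fun θ ↦ by
    rw [outerDensity_sub_natCast_mul, mul_div_cancel₀ _ two_ne_zero, Real.exp_log (by positivity)]
  refine ⟨fun z ↦ (Real.log (m * J⁻¹) / 2 : ℝ) - N * z, by fun_prop, by simp, ?_, ?_⟩
  · simp only [hdensity, integral_const_mul]
    exact inv_mul_cancel_right₀ hJ.ne' m
  · simpa only [hdensity, mul_assoc, integral_const_mul] using hN

section LogClose

variable {α : Type*} [MeasurableSpace α] {μ : Measure α} {f g : α → ℝ} {η : ℝ}

lemma le_exp_mul_of_abs_log_sub_log_le {x y : ℝ} (hx : 0 < x) (hy : 0 < y)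
    (hxy : |Real.log y - Real.log x| ≤ η) : y ≤ Real.exp η * x := by
  rw [← Real.log_le_log_iff hy (by positivity), Real.log_mul (Real.exp_pos η).ne' hx.ne',
    Real.log_exp]
  linarith [le_of_abs_le hxy]

lemma abs_sub_le_of_abs_log_sub_log_le {x y : ℝ} (hx : 0 < x) (hy : 0 < y)
    (hxy : |Real.log y - Real.log x| ≤ η) : |y - x| ≤ (Real.exp η - 1) * x := by
  have hyx := le_exp_mul_of_abs_log_sub_log_le hx hy hxy
  have hxy' : Real.exp (-η) * x ≤ y := by
    rw [Real.exp_neg, inv_mul_le_iff₀ (Real.exp_pos η)]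
    exact le_exp_mul_of_abs_log_sub_log_le hy hx (by rwa [abs_sub_comm])
  rw [abs_le]
  constructor
  · nlinarith [Real.add_one_le_exp η, Real.add_one_le_exp (-η)]
  · linarith

lemma integral_le_exp_mul_integral (hf : ∀ x, 0 < f x) (hg : ∀ x, 0 < g x) (hfi : Integrable f μ)
    (hfg : ∀ x, |Real.log (g x) - Real.log (f x)| ≤ η) :
    ∫ x, g x ∂μ ≤ Real.exp η * ∫ x, f x ∂μ := by
  rw [← integral_const_mul]
  exact integral_mono_of_nonneg (ae_of_all _ fun x ↦ (hg x).le) (hfi.const_mul _)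
    (ae_of_all _ fun x ↦ le_exp_mul_of_abs_log_sub_log_le (hf x) (hg x) (hfg x))

lemma integral_abs_sub_le_exp_sub_one_mul_integral (hf : ∀ x, 0 < f x) (hg : ∀ x, 0 < g x)
    (hfi : Integrable f μ) (hfg : ∀ x, |Real.log (g x) - Real.log (f x)| ≤ η) :
    ∫ x, |g x - f x| ∂μ ≤ (Real.exp η - 1) * ∫ x, f x ∂μ := by
  rw [← integral_const_mul]
  exact integral_mono_of_nonneg (ae_of_all _ fun x ↦ abs_nonneg _) (hfi.const_mul _)
    (ae_of_all _ fun x ↦ abs_sub_le_of_abs_log_sub_log_le (hf x) (hg x) (hfg x))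

end LogClose

/-- The densities among which the spectral factorization is studied: nonnegative functions on the
circle, of `L¹` norm at most `1` and with integrable logarithm. -/
structure IsSpectralDensity (f : ℝ → ℝ) : Prop where
  nonneg : ∀ θ, 0 ≤ f θ
  integrableOn : IntegrableOn f (Ico 0 (2 * π))
  integrableOn_log : IntegrableOn (fun θ ↦ Real.log (f θ)) (Ico 0 (2 * π))
  integral_abs_le_one : ∫ θ in Ico 0 (2 * π), |f θ| ≤ 1

lemma integrableOn_Ico_of_continuous {k : ℝ → ℝ} (hk : Continuous k) (a b : ℝ) :
    IntegrableOn k (Ico a b) :=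
  hk.integrableOn_Icc.mono_set Ico_subset_Icc_self

lemma isSpectralDensity_outerDensity {u : ℂ → ℂ} (hu : ContinuousOn u (sphere 0 1))
    (hle : ∫ θ in Ico 0 (2 * π), outerDensity u θ ≤ 1) : IsSpectralDensity (outerDensity u) where
  nonneg θ := (outerDensity_pos u θ).le
  integrableOn := integrableOn_Ico_of_continuous (continuous_outerDensity hu) _ _
  integrableOn_log := integrableOn_Ico_of_continuous (continuous_log_outerDensity hu) _ _
  integral_abs_le_one := by simpa only [abs_of_pos (outerDensity_pos u _)] using hle

section OuterPerturbation

variable {u v : ℂ → ℂ} {η : ℝ}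

lemma abs_log_outerDensity_add_sub_le (hvre : ∀ z ∈ sphere (0 : ℂ) 1, |(v z).re| ≤ η / 2)
    (θ : ℝ) : |Real.log (outerDensity (u + v) θ) - Real.log (outerDensity u θ)| ≤ η := by
  rw [log_outerDensity_add, add_sub_cancel_left, abs_mul, abs_two]
  linarith [hvre _ (circleMap_mem_sphere 0 zero_le_one θ)]

variable (hu : ContinuousOn u (sphere 0 1))
  (hvre : ∀ z ∈ sphere (0 : ℂ) 1, |(v z).re| ≤ η / 2)
  (hmass : ∫ θ in Ico 0 (2 * π), outerDensity u θ ≤ Real.exp (-η))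

include hu hvre hmass

lemma isSpectralDensity_outerDensity_add (hv : ContinuousOn v (sphere 0 1)) :
    IsSpectralDensity (outerDensity (u + v)) := by
  refine isSpectralDensity_outerDensity (hu.add hv) ?_
  calc ∫ θ in Ico 0 (2 * π), outerDensity (u + v) θ
      ≤ Real.exp η * ∫ θ in Ico 0 (2 * π), outerDensity u θ :=
        integral_le_exp_mul_integral (outerDensity_pos u) (outerDensity_pos _)
          (integrableOn_Ico_of_continuous (continuous_outerDensity hu) _ _)
          (abs_log_outerDensity_add_sub_le hvre)
    _ ≤ Real.exp η * Real.exp (-η) := by gcongr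
    _ = 1 := by rw [← Real.exp_add, add_neg_cancel, Real.exp_zero]

lemma integral_abs_outerDensity_add_sub_le (hη : 0 ≤ η) :
    ∫ θ in Ico 0 (2 * π), |outerDensity (u + v) θ - outerDensity u θ| ≤ η :=
  calc ∫ θ in Ico 0 (2 * π), |outerDensity (u + v) θ - outerDensity u θ|
      ≤ (Real.exp η - 1) * ∫ θ in Ico 0 (2 * π), outerDensity u θ :=
        integral_abs_sub_le_exp_sub_one_mul_integral (outerDensity_pos u) (outerDensity_pos _)
          (integrableOn_Ico_of_continuous (continuous_outerDensity hu) _ _)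
          (abs_log_outerDensity_add_sub_le hvre)
    _ ≤ (Real.exp η - 1) * Real.exp (-η) :=
        mul_le_mul_of_nonneg_left hmass (sub_nonneg.2 (Real.one_le_exp hη))
    _ = 1 - Real.exp (-η) := by rw [sub_one_mul, ← Real.exp_add, add_neg_cancel, Real.exp_zero]
    _ ≤ η := by linarith [Real.add_one_le_exp (-η)]

end OuterPerturbation

theorem exists_isSpectralDensity_lt_H2distSq {η a : ℝ} (hη : 0 < η) (ha : a < 4 * Real.exp (-η)) :
    ∃ f g : ℝ → ℝ, IsSpectralDensity f ∧ IsSpectralDensity g ∧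
      ∫ θ in Ico 0 (2 * π), |g θ - f θ| ≤ η ∧
      (∀ θ, |Real.log (g θ) - Real.log (f θ)| ≤ η) ∧
      a < H2distSq (spectralFactor g) (spectralFactor f) := by
  obtain ⟨v, hv, hv0, hvπ, hvre⟩ := exists_diffContOnCl_abs_re_le (half_pos hη) Real.pi_pos.le
  have hvs : ContinuousOn v (sphere 0 1) := hv.continuousOn_ball.mono sphere_subset_closedBall
  replace hvre := fun z hz ↦ hvre z (sphere_subset_closedBall hz)
  have hh : Continuous fun θ ↦ ‖Complex.exp (v (circleMap 0 1 θ)) - 1‖ ^ 2 :=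
    ((Complex.continuous_exp.comp (continuous_comp_circleMap hvs)).sub continuous_const).norm.pow 2
  have hpeak : ‖Complex.exp (v (circleMap 0 1 π)) - 1‖ ^ 2 = 4 := by
    rw [circleMap_zero, Complex.ofReal_one, one_mul, Complex.exp_pi_mul_I, hvπ,
      Complex.exp_pi_mul_I]
    norm_num
  -- The mass `exp (-η)` leaves room for the second density, which may be `exp η` times larger.
  obtain ⟨u, hu, hu0, hmass, hlt⟩ := exists_outerDensity_lt_integral_mul hh.continuousOn
    (Real.exp_pos (-η)) (by rwa [hpeak, mul_comm])
  have hus : ContinuousOn u (sphere 0 1) := hu.continuous.continuousOn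
  have hf : IsSpectralDensity (outerDensity u) :=
    isSpectralDensity_outerDensity hus (hmass.trans_le (Real.exp_le_one_iff.2 (by linarith)))
  exact ⟨_, _, hf, isSpectralDensity_outerDensity_add hus hvre hmass.le hvs,
    integral_abs_outerDensity_add_sub_le hus hvre hmass.le hη.le,
    abs_log_outerDensity_add_sub_le hvre, hlt.trans_le
      (integral_outerDensity_mul_le_H2distSq hu.diffContOnCl hu0 hv (by rw [hv0, Complex.zero_im]))⟩

theorem exists_isSpectralDensity_two_sub_le_sqrt_H2distSq {δ : ℝ} (hδ : 0 < δ) (hδ2 : δ ≤ 2) :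
    ∃ f g : ℝ → ℝ, IsSpectralDensity f ∧ IsSpectralDensity g ∧
      ∫ θ in Ico 0 (2 * π), |g θ - f θ| ≤ δ ∧
      ∫ θ in Ico 0 (2 * π), |Real.log (g θ) - Real.log (f θ)| ≤ δ ∧
      2 - δ ≤ √(H2distSq (spectralFactor g) (spectralFactor f)) := by
  have hη : δ / (2 * π) < δ / 2 := by
    gcongr
    linarith [Real.pi_gt_three]
  have hgap : (2 - δ) ^ 2 < 4 * Real.exp (-(δ / (2 * π))) := by
    nlinarith [Real.add_one_le_exp (-(δ / (2 * π)))]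
  obtain ⟨f, g, hf, hg, hdist, hlog, hlt⟩ :=
    exists_isSpectralDensity_lt_H2distSq (div_pos hδ Real.two_pi_pos) hgap
  refine ⟨f, g, hf, hg, by linarith, ?_, Real.le_sqrt_of_sq_le hlt.le⟩
  calc ∫ θ in Ico 0 (2 * π), |Real.log (g θ) - Real.log (f θ)|
      ≤ ∫ θ in Ico 0 (2 * π), δ / (2 * π) :=
        setIntegral_mono ((hg.integrableOn_log.sub hf.integrableOn_log).abs)
          (integrableOn_Ico_of_continuous continuous_const _ _) hlog
    _ = δ := by
        rw [setIntegral_const, Real.volume_real_Ico_of_le Real.two_pi_pos.le, smul_eq_mul, sub_zero,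
          mul_div_cancel₀ _ Real.two_pi_pos.ne']

lemma tendsto_modulus_comp {ι : Type*} {l : Filter ι} {Pi : ℝ → ℝ → ℝ}
    (hPi : Tendsto (fun p : ℝ × ℝ ↦ Pi p.1 p.2) (𝓝[Ici 0 ×ˢ Ici 0] (0, 0)) (𝓝 0))
    {a b : ι → ℝ} (ha0 : ∀ i, 0 ≤ a i) (hb0 : ∀ i, 0 ≤ b i) (ha : Tendsto a l (𝓝 0))
    (hb : Tendsto b l (𝓝 0)) : Tendsto (fun i ↦ Pi (a i) (b i)) l (𝓝 0) :=
  hPi.comp (tendsto_nhdsWithin_iff.2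
    ⟨ha.prodMk_nhds hb, Eventually.of_forall fun i ↦ ⟨ha0 i, hb0 i⟩⟩)

lemma tendsto_zero_of_le_one_div {a : ℕ → ℝ} (ha0 : ∀ n, 0 ≤ a n)
    (ha : ∀ n, 0 < n → a n ≤ 1 / n) : Tendsto a atTop (𝓝 0) :=
  squeeze_zero' (Eventually.of_forall ha0) ((eventually_gt_atTop 0).mono ha)
    tendsto_one_div_atTop_nhds_zero_nat

/-- Theorem 1 (negative result): there are nonnegative densities `f_n, g_n`
with `‖f_n‖₁, ‖g_n‖₁ ≤ 1`, `‖g_n − f_n‖₁ ≤ 1/n`, `‖log g_n − log f_n‖₁ ≤ 1/n`,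
but `‖g_n⁺ − f_n⁺‖_{H²} ≥ 2 − 1/n`; consequently no modulus of continuity
`Π(s,t) → 0` as `(s,t) → (0,0)` controls `‖g⁺ − f⁺‖²_{H²}` in terms of
`‖g − f‖₁` and `‖log g − log f‖₁` for all densities of `L¹` norm at most 1. -/
theorem stmt14 :
    (∃ f g : ℕ → ℝ → ℝ, ∀ n : ℕ, 0 < n →
      (∀ θ, 0 ≤ f n θ) ∧ (∀ θ, 0 ≤ g n θ) ∧
      IntegrableOn (f n) (Ico 0 (2 * Real.pi)) ∧
      IntegrableOn (g n) (Ico 0 (2 * Real.pi)) ∧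
      IntegrableOn (fun θ => Real.log (f n θ)) (Ico 0 (2 * Real.pi)) ∧
      IntegrableOn (fun θ => Real.log (g n θ)) (Ico 0 (2 * Real.pi)) ∧
      (∫ θ in Ico 0 (2 * Real.pi), |f n θ|) ≤ 1 ∧
      (∫ θ in Ico 0 (2 * Real.pi), |g n θ|) ≤ 1 ∧
      (∫ θ in Ico 0 (2 * Real.pi), |g n θ - f n θ|) ≤ 1 / (n : ℝ) ∧
      (∫ θ in Ico 0 (2 * Real.pi), |Real.log (g n θ) - Real.log (f n θ)|) ≤ 1 / (n : ℝ) ∧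
      2 - 1 / (n : ℝ) ≤
        Real.sqrt (H2distSq (spectralFactor (g n)) (spectralFactor (f n)))) ∧
    ¬ ∃ Pi : ℝ → ℝ → ℝ,
      Tendsto (fun p : ℝ × ℝ => Pi p.1 p.2)
        (nhdsWithin (0, 0) (Ici 0 ×ˢ Ici 0)) (nhds 0) ∧
      ∀ f g : ℝ → ℝ, (∀ θ, 0 ≤ f θ) → (∀ θ, 0 ≤ g θ) →
        IntegrableOn f (Ico 0 (2 * Real.pi)) →
        IntegrableOn g (Ico 0 (2 * Real.pi)) →
        IntegrableOn (fun θ => Real.log (f θ)) (Ico 0 (2 * Real.pi)) →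
        IntegrableOn (fun θ => Real.log (g θ)) (Ico 0 (2 * Real.pi)) →
        (∫ θ in Ico 0 (2 * Real.pi), |f θ|) ≤ 1 →
        (∫ θ in Ico 0 (2 * Real.pi), |g θ|) ≤ 1 →
        H2distSq (spectralFactor (g)) (spectralFactor (f)) ≤
          Pi (∫ θ in Ico 0 (2 * Real.pi), |g θ - f θ|)
            (∫ θ in Ico 0 (2 * Real.pi), |Real.log (g θ) - Real.log (f θ)|) := by
  have hdelta : ∀ n : ℕ, 0 < n → (0 : ℝ) < 1 / n ∧ 1 / (n : ℝ) ≤ 1 := fun n hn ↦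
    ⟨by positivity, div_le_one_of_le₀ (by exact_mod_cast hn) (by positivity)⟩
  choose! f g hf hg hdist hlog hH2 using fun (n : ℕ) (hn : 0 < n) ↦
    exists_isSpectralDensity_two_sub_le_sqrt_H2distSq (hdelta n hn).1
      ((hdelta n hn).2.trans one_le_two)
  refine ⟨⟨f, g, fun n hn ↦ ⟨(hf n hn).nonneg, (hg n hn).nonneg, (hf n hn).integrableOn,
    (hg n hn).integrableOn, (hf n hn).integrableOn_log, (hg n hn).integrableOn_log,
    (hf n hn).integral_abs_le_one, (hg n hn).integral_abs_le_one, hdist n hn, hlog n hn,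
    hH2 n hn⟩⟩, ?_⟩
  rintro ⟨Pi, hPi, hmodulus⟩
  have hnonneg : ∀ k : ℝ → ℝ, 0 ≤ ∫ θ in Ico 0 (2 * π), |k θ| := fun k ↦
    integral_nonneg fun θ ↦ abs_nonneg (k θ)
  have hlim := tendsto_modulus_comp hPi (fun n ↦ hnonneg _) (fun n ↦ hnonneg _)
    (tendsto_zero_of_le_one_div (fun n ↦ hnonneg _) hdist)
    (tendsto_zero_of_le_one_div (fun n ↦ hnonneg _) hlog)
  refine zero_lt_one.not_ge (ge_of_tendsto hlim ((eventually_gt_atTop 0).mono fun n hn ↦ ?_))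
  have hone : 1 ≤ H2distSq (spectralFactor (g n)) (spectralFactor (f n)) :=
    Real.one_le_sqrt.1 (by linarith [hH2 n hn, (hdelta n hn).2])
  exact hone.trans (hmodulus (f n) (g n) (hf n hn).nonneg (hg n hn).nonneg (hf n hn).integrableOn
    (hg n hn).integrableOn (hf n hn).integrableOn_log (hg n hn).integrableOn_log
    (hf n hn).integral_abs_le_one (hg n hn).integral_abs_le_one)
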